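/- There exists a constant C > 0 such that for all sufficiently large real x, writing y = log log x, the number of primes p ≤ x for which D_y(p²−1) does not divide L_y is at most C · x / (y^{1/2} · log x). In particular this count is o(π(x)). -/

import Mathlib

open Filter Topology

/-- `Ly y` is the least common multiple of all positive integers `m ≤ y`. -/
noncomputable def Ly (y : ℝ) : ℕ := (Finset.Icc 1 ⌊y⌋₊).lcm id

/-- `Dy y n` is the largest `y`-smooth divisor of `n`: the largest divisor of `n`
all of whose prime factors are at most `y`. -/
noncomputable def Dy (y : ℝ) (n : ℕ) : ℕ :=
  ∏ q ∈ n.primeFactors.filter (fun q : ℕ => (q : ℝ) ≤ y), q ^ n.factorization q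

/-!
If `D_y(p² - 1)` does not divide `L_y`, then `p² - 1` is divisible by the least power of some prime
`q ≤ y` that exceeds `y`, so `p ≡ ±1` modulo that power, or modulo half of it if `q = 2`. Call this
modulus `d`. Comparing the product of the first `N` terms of a residue class modulo `d` with `N!`
shows that the primes above `N` among them have product at most `d ^ (2 * N)`; with `N` about
`x / d`, the class contains `O(x log d / (d log x))` primes up to `x`. That is worse than the
Brun–Titchmarsh bound by a factor `log d ≪ log y`, but `∑ 1 / d ≪ 1 / (√y log y)` over `q ≤ y`
makes up for the loss. This last sum is split at `q = √y`: below, `d > y / 2` and there are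
`O(√y / log y)` primes by Chebyshev; above, `d ≥ q²` and partial summation applies.
-/

section ProgressionProducts

open Finset Nat

lemma dvd_prod_arithmetic_progression {d m N : ℕ} (hm : m ∣ N !) (hd : d.Coprime m) (r : ℕ) :
    m ∣ ∏ i ∈ range N, (d * i + r) := by
  have : NeZero m := ⟨ne_zero_of_dvd_ne_zero N.factorial_ne_zero hm⟩
  obtain ⟨c, hc⟩ : ∃ c : ℕ, (d * c : ZMod m) = r := by
    refine ⟨(r * (d : ZMod m)⁻¹).val, ?_⟩
    rw [ZMod.natCast_zmod_val, mul_left_comm, ZMod.coe_mul_inv_eq_one d hd, mul_one]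
  rw [← ZMod.natCast_eq_zero_iff]
  calc ((∏ i ∈ range N, (d * i + r) : ℕ) : ZMod m)
      = ∏ i ∈ range N, (d * (c + i) : ZMod m) := by
        push_cast
        exact prod_congr rfl fun i _ ↦ by rw [← hc]; ring
    _ = d ^ N * (c.ascFactorial N : ℕ) := by
        simp only [prod_mul_distrib, prod_const, card_range, ascFactorial_eq_prod_range,
          cast_prod, cast_add]
    _ = 0 := by
        rw [(ZMod.natCast_eq_zero_iff _ m).2 (hm.trans (factorial_dvd_ascFactorial c N)), mul_zero]

lemma exists_factorial_eq_mul_coprime {d : ℕ} (hd : d ≠ 0) (N : ℕ) :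
    ∃ A B : ℕ, N ! = A * B ∧ A ≤ d ^ N ∧ d.Coprime B := by
  set A := ∏ p ∈ d.primeFactors, p ^ (N !).factorization p
  have hA : A ∣ N ! := by
    refine prod_dvd_of_isRelPrime (fun p hp q hq hpq ↦ ?_) fun p _ ↦ ordProj_dvd _ p
    exact coprime_iff_isRelPrime.1 <| Coprime.pow _ _ <|
      (coprime_primes (prime_of_mem_primeFactors hp) (prime_of_mem_primeFactors hq)).2 hpq
  obtain ⟨B, hB⟩ := hA
  refine ⟨A, B, hB, ?_, coprime_of_dvd fun p hp hpd hpB ↦ ?_⟩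
  · calc A ≤ ∏ p ∈ d.primeFactors, p ^ N := by
          refine prod_le_prod' fun p hp ↦ ?_
          have hp := prime_of_mem_primeFactors hp
          exact Nat.pow_le_pow_right hp.pos
            ((factorization_factorial_le_div_pred hp N).trans (Nat.div_le_self _ _))
      _ = (∏ p ∈ d.primeFactors, p) ^ N := prod_pow ..
      _ ≤ d ^ N := Nat.pow_le_pow_left (le_of_dvd hd.pos (prod_primeFactors_dvd d)) N
  · refine pow_succ_factorization_not_dvd N.factorial_ne_zero hp ?_
    have hpA : p ^ (N !).factorization p ∣ A :=
      dvd_prod_of_mem (fun p ↦ p ^ (N !).factorization p) (mem_primeFactors.2 ⟨hp, hpd, hd⟩)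
    calc p ^ ((N !).factorization p + 1) = p ^ (N !).factorization p * p := pow_succ ..
      _ ∣ A * B := mul_dvd_mul hpA hpB
      _ = N ! := hB.symm

lemma exists_lt_eq_mul_add_of_cast_eq {d n N : ℕ} {a : ZMod d} (hn : n ≠ 0) (hnN : n ≤ d * N)
    (hna : (n : ZMod d) = a) : ∃ i < N, n = d * i + ((a - 1).val + 1) := by
  refine ⟨(n - 1) / d, Nat.div_lt_of_lt_mul (by omega), ?_⟩
  have hmod : (n - 1) % d = (a - 1).val := by
    rw [← hna, ← cast_pred hn.pos, ZMod.val_natCast]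
  have := Nat.div_add_mod (n - 1) d
  omega

/-- The primes `p ≤ n` with `p ≡ a (mod d)`. -/
def primesInProgression {d : ℕ} (a : ZMod d) (n : ℕ) : Finset ℕ :=
  {p ∈ primesLE n | (p : ZMod d) = a}

lemma primesInProgression_mono {d : ℕ} (a : ZMod d) : Monotone (primesInProgression a) :=
  fun _ _ h ↦ filter_subset_filter _ (primesLE_mono h)

variable {d : ℕ} [NeZero d] (a : ZMod d)

/- The part of `N!` prime to `d` divides the product of the `N` terms of the progression, and it is
coprime to the primes above `N`, so both together are at most `d ^ N * N!`. -/
lemma prod_primesInProgression_le (N : ℕ) :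
    ∏ p ∈ primesInProgression a (d * N) with N < p, p ≤ d ^ (2 * N) := by
  set r := (a - 1).val + 1
  have hr : r ≤ d := (a - 1).val_lt
  set S := {p ∈ primesInProgression a (d * N) | N < p}
  have hS {p : ℕ} (hp : p ∈ S) : p.Prime ∧ N < p ∧ ∃ i < N, p = d * i + r := by
    obtain ⟨hp, hNp⟩ := mem_filter.1 hp
    obtain ⟨hp, hpa⟩ := mem_filter.1 hp
    have hpp := prime_of_mem_primesLE hp
    exact ⟨hpp, hNp, exists_lt_eq_mul_add_of_cast_eq hpp.ne_zero (le_of_mem_primesLE hp) hpa⟩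
  obtain ⟨A, B, hAB, hA, hdB⟩ := exists_factorial_eq_mul_coprime (NeZero.ne d) N
  have hBN : B ∣ N ! := Dvd.intro_left A hAB.symm
  have hS_dvd : ∏ p ∈ S, p ∣ ∏ i ∈ range N, (d * i + r) := by
    refine prod_primes_dvd _ (fun p hp ↦ (hS hp).1.prime) fun p hp ↦ ?_
    obtain ⟨-, -, i, hi, rfl⟩ := hS hp
    exact dvd_prod_of_mem (fun i ↦ d * i + r) (mem_range.2 hi)
  have hS_coprime : (∏ p ∈ S, p).Coprime B := Coprime.prod_left fun p hp ↦ by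
    obtain ⟨hpp, hNp, -⟩ := hS hp
    exact ((coprime_factorial_iff hpp.ne_one).2 (by rwa [hpp.minFac_eq])).coprime_dvd_right hBN
  have hmul_dvd := hS_coprime.mul_dvd_of_dvd_of_dvd hS_dvd
    (dvd_prod_arithmetic_progression hBN hdB r)
  refine Nat.le_of_mul_le_mul_right ?_ (pos_of_dvd_of_pos hBN N.factorial_pos)
  calc (∏ p ∈ S, p) * B ≤ ∏ i ∈ range N, (d * i + r) :=
        le_of_dvd (prod_pos fun i _ ↦ by positivity) hmul_dvd
    _ ≤ ∏ i ∈ range N, d * (i + 1) := prod_le_prod' fun i _ ↦ by rw [mul_add_one]; gcongr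
    _ = d ^ N * (A * B) := by
        rw [prod_mul_distrib, prod_const, card_range, prod_range_add_one_eq_factorial, hAB]
    _ ≤ d ^ N * (d ^ N * B) := by gcongr
    _ = d ^ (2 * N) * B := by ring

end ProgressionProducts

section ChebyshevBounds

open Finset Real

lemma log_four_le : log 4 ≤ 7 / 5 := by
  rw [show (4 : ℝ) = 2 ^ 2 by norm_num, log_pow]
  push_cast
  linarith [log_two_lt_d9]

lemma primeCounting_mul_log_le {x : ℝ} (hx : 0 ≤ x) :
    (Nat.primeCounting ⌊x⌋₊ : ℝ) * log x ≤ 5 * x := by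
  rcases le_or_gt x 1 with hx1 | hx1
  · have hfloor : ⌊x⌋₊ ≤ 1 := Nat.floor_le_of_le (by simpa using hx1)
    rw [Nat.primeCounting_eq_zero_iff.2 hfloor]
    simpa using hx
  have hs : 1 < √x := lt_sqrt_of_sq_lt (by simpa using hx1)
  have hl : 0 < log √x := log_pos hs
  have hls : log √x ≤ √x := log_le_self (sqrt_nonneg x)
  calc (Nat.primeCounting ⌊x⌋₊ : ℝ) * log x
      ≤ (log 4 * x / log √x + √x) * log x := by
        gcongr
        exacts [log_nonneg hx1.le, Chebyshev.pi_le_log4_mul_div hx1]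
    _ = (log 4 * x / log √x + √x) * (2 * log √x) := by rw [log_sqrt hx]; ring
    _ = 2 * (log 4 * x + √x * log √x) := by field_simp
    _ ≤ 2 * (7 / 5 * x + √x * √x) := by gcongr; exact log_four_le
    _ ≤ 5 * x := by rw [mul_self_sqrt hx]; linarith

lemma sum_Ioc_div_sq_le_of_sum_le {f : ℕ → ℝ} {c : ℝ} (hf : ∀ n, 0 ≤ f n)
    (hsum : ∀ n : ℕ, ∑ k ∈ Ioc 0 n, f k ≤ c * n) {Q M : ℕ} (hQ : 0 < Q) (hQM : Q ≤ M) :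
    ∑ n ∈ Ioc Q M, f n / n ^ 2 ≤ 2 * c / Q := by
  set F : ℕ → ℝ := fun n ↦ ∑ k ∈ Ioc 0 n, f k
  have hF (n : ℕ) : 0 ≤ F n := sum_nonneg fun k _ ↦ hf k
  have habel : ∑ n ∈ Ioc Q M, f n / n ^ 2 ≤ F M / M ^ 2 + 2 * c * (1 / Q - 1 / M) := by
    induction M, hQM using Nat.le_induction with
    | base => simpa using div_nonneg (hF Q) (by positivity)
    | succ M hM ih =>
      have hM0 : (0 : ℝ) < M := mod_cast hQ.trans_le hM
      have hc : 0 ≤ c := nonneg_of_mul_nonneg_left ((hF M).trans (hsum M)) hM0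
      have hdecr : F M * (1 / M ^ 2 - 1 / (M + 1) ^ 2) ≤ 2 * c * (1 / M - 1 / (M + 1)) :=
        calc F M * (1 / M ^ 2 - 1 / (M + 1) ^ 2)
            = F M * ((2 * M + 1) / (M ^ 2 * (M + 1) ^ 2)) := by field_simp; ring
          _ ≤ c * M * ((2 * (M + 1)) / (M ^ 2 * (M + 1) ^ 2)) := by
              gcongr
              exacts [hsum M, by linarith]
          _ = 2 * c * (1 / M - 1 / (M + 1)) := by field_simp; ring
      have hFsucc : F (M + 1) = F M + f (M + 1) := sum_Ioc_succ_top M.zero_le _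
      rw [sum_Ioc_succ_top hM, hFsucc]
      push_cast
      linear_combination ih + hdecr
  have hM : (0 : ℝ) < M := mod_cast hQ.trans_le hQM
  calc ∑ n ∈ Ioc Q M, f n / n ^ 2 ≤ F M / M ^ 2 + 2 * c * (1 / Q - 1 / M) := habel
    _ ≤ c * M / M ^ 2 + 2 * c * (1 / Q - 1 / M) := by gcongr; exact hsum M
    _ = 2 * c / Q - c / M := by field_simp; ring
    _ ≤ 2 * c / Q := by
        have : 0 ≤ c := nonneg_of_mul_nonneg_left ((hF M).trans (hsum M)) hM
        exact sub_le_self _ (by positivity)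

lemma sum_primes_log_div_sq_le {Q M : ℕ} (hQ : 0 < Q) (hQM : Q ≤ M) :
    ∑ q ∈ Ioc Q M with q.Prime, log q / (q : ℝ) ^ 2 ≤ 2 * log 4 / Q := by
  have hsum (n : ℕ) : ∑ k ∈ Ioc 0 n, (if k.Prime then log k else 0) ≤ log 4 * n := by
    simpa [Chebyshev.theta, sum_filter] using Chebyshev.theta_le_log4_mul_x n.cast_nonneg
  have hnonneg (n : ℕ) : 0 ≤ if n.Prime then log n else 0 := by positivity
  simpa only [sum_filter, ite_div, zero_div] using sum_Ioc_div_sq_le_of_sum_le hnonneg hsum hQ hQM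

end ChebyshevBounds

section ProgressionCounts

open Finset Real

variable {d : ℕ} [NeZero d] (a : ZMod d)

lemma card_filter_lt_primesInProgression_mul_log_le (N : ℕ) :
    (#{p ∈ primesInProgression a (d * N) | N < p} : ℝ) * log N ≤ 2 * N * log d := by
  set S := {p ∈ primesInProgression a (d * N) | N < p}
  have hS {p : ℕ} (hp : p ∈ S) : N < p := (mem_filter.1 hp).2
  calc (#S : ℝ) * log N = log (∏ _p ∈ S, (N : ℝ)) := by rw [prod_const, log_pow]
    _ ≤ log (d ^ (2 * N)) := ?_
    _ = 2 * N * log d := by rw [log_pow]; push_cast; rfl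
  rcases N.eq_zero_or_pos with rfl | hN
  · simp
  refine log_le_log (prod_pos fun _ _ ↦ mod_cast hN) ?_
  calc ∏ _p ∈ S, (N : ℝ) ≤ ∏ p ∈ S, (p : ℝ) :=
        prod_le_prod (fun _ _ ↦ N.cast_nonneg) fun p hp ↦ mod_cast (hS hp).le
    _ ≤ d ^ (2 * N) := by
        rw [← Nat.cast_prod]
        exact_mod_cast prod_primesInProgression_le a N

lemma card_primesInProgression_mul_log_le (N : ℕ) :
    (#(primesInProgression a (d * N)) : ℝ) * log N ≤ N * (5 + 2 * log d) := by
  have hcard : #(primesInProgression a (d * N)) ≤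
      N.primeCounting + #{p ∈ primesInProgression a (d * N) | N < p} := by
    rw [← Nat.primesLE_card_eq_primeCounting]
    refine (card_le_card fun p hp ↦ ?_).trans (card_union_le _ _)
    simp only [mem_union, primesInProgression, mem_filter, Nat.mem_primesLE] at hp ⊢
    grind
  have hpi := primeCounting_mul_log_le (x := N) N.cast_nonneg
  rw [Nat.floor_natCast] at hpi
  calc _ ≤ (N.primeCounting + #{p ∈ primesInProgression a (d * N) | N < p} : ℝ) *
        log N := by
        gcongr
        exact_mod_cast hcard
    _ ≤ 5 * N + 2 * N * log d := by
        rw [add_mul]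
        exact add_le_add hpi (card_filter_lt_primesInProgression_mul_log_le a N)
    _ = N * (5 + 2 * log d) := by ring

lemma card_primesInProgression_floor_mul_log_le {x : ℝ} (hdx : (d : ℝ) ^ 2 ≤ x) :
    (#(primesInProgression a ⌊x⌋₊) : ℝ) * log x ≤
      4 * x / d * (5 + 2 * log d) := by
  have hd : (1 : ℝ) ≤ d := mod_cast NeZero.one_le
  have hx : 1 ≤ x := (one_le_pow₀ hd).trans hdx
  set N := ⌊x / d⌋₊ + 1 with hN
  have hxN : x ≤ d * N := by
    rw [← div_le_iff₀' (by positivity), hN]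
    exact_mod_cast (Nat.lt_floor_add_one (x / d)).le
  have hNx : (N : ℝ) ≤ 2 * x / d := by
    have hfloor : (⌊x / d⌋₊ : ℝ) ≤ x / d := Nat.floor_le (by positivity)
    have hone : 1 ≤ x / d := by rw [one_le_div (by positivity)]; nlinarith
    rw [hN, mul_div_assoc]
    push_cast
    linarith
  have hsqrt : √x ≤ N := by
    have hd_sqrt : (d : ℝ) ≤ √x := le_sqrt_of_sq_le hdx
    refine le_of_mul_le_mul_left ?_ (sqrt_pos.2 (by positivity : 0 < x))
    calc √x * √x = x := mul_self_sqrt (by positivity)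
      _ ≤ d * N := hxN
      _ ≤ √x * N := by gcongr
  have hlog : log x ≤ 2 * log N := by
    have := log_le_log (sqrt_pos.2 (by positivity)) hsqrt
    rw [log_sqrt (by positivity)] at this
    linarith
  have hfloor : ⌊x⌋₊ ≤ d * N := Nat.floor_le_of_le (mod_cast hxN)
  have hlogd : 0 ≤ log d := log_nonneg hd
  calc _ ≤ (#(primesInProgression a (d * N)) : ℝ) * (2 * log N) := by
        gcongr
        exacts [log_nonneg hx, primesInProgression_mono a hfloor]
    _ = 2 * (#(primesInProgression a (d * N)) * log N) := by ring
    _ ≤ 2 * (2 * x / d * (5 + 2 * log d)) := by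
        grw [card_primesInProgression_mul_log_le, hNx]
    _ = 4 * x / d * (5 + 2 * log d) := by ring

end ProgressionCounts

section SquaresModPrimePowers

lemma pow_dvd_or_pow_dvd_of_pow_dvd_mul {M : Type*} [CommMonoidWithZero M] [IsCancelMulZero M]
    {p a b : M} (hp : Prime p) (hab : ¬(p ∣ a ∧ p ∣ b)) {k : ℕ} (h : p ^ k ∣ a * b) :
    p ^ k ∣ a ∨ p ^ k ∣ b := by
  by_cases ha : p ∣ a
  · exact .inl <| hp.pow_dvd_of_dvd_mul_right k (fun hb ↦ hab ⟨ha, hb⟩) h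
  · exact .inr <| hp.pow_dvd_of_dvd_mul_left k ha h

lemma odd_prime_pow_dvd_sub_one_or_add_one {q : ℕ} (hq : q.Prime) (hq2 : q ≠ 2) {k : ℕ} {n : ℤ}
    (h : (q : ℤ) ^ k ∣ n ^ 2 - 1) : (q : ℤ) ^ k ∣ n - 1 ∨ (q : ℤ) ^ k ∣ n + 1 := by
  refine pow_dvd_or_pow_dvd_of_pow_dvd_mul (Nat.prime_iff_prime_int.1 hq) ?_
    (h.trans (dvd_of_eq (by ring)))
  rintro ⟨hsub, hadd⟩
  have hdvd : (q : ℤ) ∣ (2 : ℕ) := by simpa [add_sub_sub_cancel] using dvd_sub hadd hsub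
  exact hq2 <| (Nat.prime_dvd_prime_iff_eq hq Nat.prime_two).1 (Int.natCast_dvd_natCast.1 hdvd)

lemma two_pow_dvd_sub_one_or_add_one {k : ℕ} {n : ℤ} (h : 2 ^ (k + 1) ∣ n ^ 2 - 1) :
    2 ^ k ∣ n - 1 ∨ 2 ^ k ∣ n + 1 := by
  rcases k with _ | k
  · simp
  have hodd : ¬2 ∣ n := fun hn ↦ by
    have hone : (2 : ℤ) ∣ 1 := by
      simpa using dvd_sub (dvd_pow hn two_ne_zero) ((dvd_pow_self 2 (by omega)).trans h)
    omega
  obtain ⟨u, rfl⟩ : ∃ u, n = 2 * u + 1 := ⟨n / 2, by omega⟩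
  have hu : 2 ^ k ∣ u * (u + 1) := by
    refine (mul_dvd_mul_iff_left (show (4 : ℤ) ≠ 0 by norm_num)).1 ?_
    convert! h using 1 <;> ring
  have hcoprime : ¬(2 ∣ u ∧ 2 ∣ u + 1) := by omega
  refine (pow_dvd_or_pow_dvd_of_pow_dvd_mul Int.prime_two hcoprime hu).imp (fun h ↦ ?_) fun h ↦ ?_
  · simpa [pow_succ'] using mul_dvd_mul_left 2 h
  · rw [pow_succ', show 2 * u + 1 + 1 = 2 * (u + 1) by ring]
    exact mul_dvd_mul_left 2 h

end SquaresModPrimePowers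

/-- A modulus attached to the prime `q` such that `n ≡ ±1` modulo it whenever `n ^ 2 - 1` is
divisible by the least power of `q` exceeding `y`. It is that power itself if `q` is odd, and half
of it if `q = 2`, where both `n - 1` and `n + 1` are even. -/
noncomputable def excessModulus (y : ℝ) (q : ℕ) : ℕ :=
  if q = 2 then q ^ Nat.log q ⌊y⌋₊ else q ^ (Nat.log q ⌊y⌋₊ + 1)

section ExcessModulus

variable {y : ℝ} {q : ℕ}

lemma excessModulus_pos (hq : 0 < q) : 0 < excessModulus y q := by
  unfold excessModulus
  split_ifs <;> positivity

lemma lt_two_mul_excessModulus (hq : 1 < q) : y < 2 * excessModulus y q := by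
  have hlt : ⌊y⌋₊ < q ^ (Nat.log q ⌊y⌋₊ + 1) := Nat.lt_pow_succ_log_self hq _
  have hle : q ^ (Nat.log q ⌊y⌋₊ + 1) ≤ 2 * excessModulus y q := by
    unfold excessModulus
    split_ifs with h
    · rw [pow_succ', h]
    · omega
  calc y < ⌊y⌋₊ + 1 := Nat.lt_floor_add_one y
    _ ≤ 2 * excessModulus y q := mod_cast hlt.trans_le hle

lemma sq_le_excessModulus (hq : 2 < q) (hqy : q ≤ ⌊y⌋₊) : q ^ 2 ≤ excessModulus y q := by
  have hlog : 0 < Nat.log q ⌊y⌋₊ := Nat.log_pos (by omega) hqy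
  rw [excessModulus, if_neg hq.ne']
  exact Nat.pow_le_pow_right (by omega) (by omega)

lemma excessModulus_le_sq (hq : 0 < q) (hqy : q ≤ ⌊y⌋₊) : (excessModulus y q : ℝ) ≤ y ^ 2 := by
  have hy : ⌊y⌋₊ ≠ 0 := (hq.trans_le hqy).ne'
  have hpow : q ^ Nat.log q ⌊y⌋₊ ≤ ⌊y⌋₊ := Nat.pow_log_le_self q hy
  have hle : excessModulus y q ≤ ⌊y⌋₊ ^ 2 :=
    calc excessModulus y q ≤ q ^ (Nat.log q ⌊y⌋₊ + 1) := by
          unfold excessModulus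
          split_ifs
          · exact Nat.pow_le_pow_right hq (Nat.le_succ _)
          · rfl
      _ ≤ ⌊y⌋₊ * ⌊y⌋₊ := by rw [pow_succ]; gcongr
      _ = ⌊y⌋₊ ^ 2 := (sq _).symm
  calc (excessModulus y q : ℝ) ≤ (⌊y⌋₊ : ℝ) ^ 2 := mod_cast hle
    _ ≤ y ^ 2 := by gcongr; exact Nat.floor_le (Nat.pos_of_floor_pos hy.bot_lt).le

lemma cast_excessModulus_eq_one_or_neg_one (hq : q.Prime) {n : ℕ} (hn : n ≠ 0)
    (h : q ^ (Nat.log q ⌊y⌋₊ + 1) ∣ n ^ 2 - 1) :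
    (n : ZMod (excessModulus y q)) = 1 ∨ (n : ZMod (excessModulus y q)) = -1 := by
  have hn1 : 1 ≤ n ^ 2 := Nat.one_le_pow _ _ hn.bot_lt
  have h : (q : ℤ) ^ (Nat.log q ⌊y⌋₊ + 1) ∣ (n : ℤ) ^ 2 - 1 := by
    rw [← Int.natCast_dvd_natCast] at h
    push_cast [hn1] at h
    exact h
  have hdvd : (excessModulus y q : ℤ) ∣ n - 1 ∨ (excessModulus y q : ℤ) ∣ n + 1 := by
    unfold excessModulus
    split_ifs with hq2
    · subst hq2
      exact_mod_cast two_pow_dvd_sub_one_or_add_one h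
    · exact_mod_cast odd_prime_pow_dvd_sub_one_or_add_one hq hq2 h
  simpa [← ZMod.intCast_zmod_eq_zero_iff_dvd, sub_eq_zero, add_eq_zero_iff_eq_neg] using hdvd

end ExcessModulus

section ExcessModulusSum

open Finset Real

variable {y : ℝ}

lemma sum_small_primes_inv_excessModulus_le (hy : 1 < y) :
    ∑ q ∈ Nat.primesLE ⌊√y⌋₊, (excessModulus y q : ℝ)⁻¹ ≤ 20 / (√y * log y) := by
  have hlog : 0 < log y := log_pos hy
  have hterm : ∀ q ∈ Nat.primesLE ⌊√y⌋₊, (excessModulus y q : ℝ)⁻¹ ≤ 2 / y := fun q hq ↦ by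
    have hlt := lt_two_mul_excessModulus (y := y) (Nat.one_lt_of_mem_primesLE hq)
    rw [inv_le_comm₀ (by linarith) (by positivity), inv_div]
    linarith
  have hpi : (Nat.primeCounting ⌊√y⌋₊ : ℝ) ≤ 10 * √y / log y := by
    have := primeCounting_mul_log_le (sqrt_nonneg y)
    rw [log_sqrt (by positivity)] at this
    rw [le_div_iff₀ hlog]
    linarith
  calc _ ≤ (Nat.primeCounting ⌊√y⌋₊ : ℝ) * (2 / y) := by
        rw [← Nat.primesLE_card_eq_primeCounting, ← nsmul_eq_mul]
        exact sum_le_card_nsmul _ _ _ hterm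
    _ ≤ 10 * √y / log y * (2 / (√y * √y)) := by
        rw [mul_self_sqrt (by positivity)]
        gcongr
    _ = 20 / (√y * log y) := by field_simp; norm_num

lemma sum_large_primes_inv_excessModulus_le (hy : 4 ≤ y) :
    ∑ q ∈ Ioc ⌊√y⌋₊ ⌊y⌋₊ with q.Prime, (excessModulus y q : ℝ)⁻¹ ≤ 12 / (√y * log y) := by
  have hs : 2 ≤ √y := le_sqrt_of_sq_le (by linarith)
  have hQ : 2 ≤ ⌊√y⌋₊ := Nat.le_floor (mod_cast hs)
  have hQ_le : ⌊√y⌋₊ ≤ ⌊y⌋₊ := Nat.floor_mono (sqrt_le_iff.2 ⟨by linarith, by nlinarith⟩)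
  have hQ_gt : √y / 2 ≤ ⌊√y⌋₊ := by linarith [Nat.lt_floor_add_one √y]
  have hlog : 0 < log y := log_pos (by linarith)
  have hterm : ∀ q ∈ ({q ∈ Ioc ⌊√y⌋₊ ⌊y⌋₊ | q.Prime} : Finset ℕ),
      (excessModulus y q : ℝ)⁻¹ ≤ 2 / log y * (log q / (q : ℝ) ^ 2) := fun q hq ↦ by
    obtain ⟨hq, -⟩ := mem_filter.1 hq
    obtain ⟨hQq, hqy⟩ := mem_Ioc.1 hq
    have hq0 : (0 : ℝ) < q := mod_cast (by omega : 0 < q)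
    have hlogq : log y / 2 ≤ log q := by
      rw [← log_sqrt (by linarith)]
      exact log_le_log (by linarith) ((Nat.floor_lt (by linarith)).1 hQq).le
    calc (excessModulus y q : ℝ)⁻¹ ≤ ((q : ℝ) ^ 2)⁻¹ := by
          gcongr
          exact_mod_cast sq_le_excessModulus (by omega) hqy
      _ = 2 / log y * (log y / 2 / (q : ℝ) ^ 2) := by field_simp
      _ ≤ 2 / log y * (log q / (q : ℝ) ^ 2) := by gcongr
  calc _ ≤ 2 / log y * ∑ q ∈ Ioc ⌊√y⌋₊ ⌊y⌋₊ with q.Prime, log q / (q : ℝ) ^ 2 := by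
        rw [mul_sum]
        exact sum_le_sum hterm
    _ ≤ 2 / log y * (2 * log 4 / ⌊√y⌋₊) := by
        gcongr
        exact sum_primes_log_div_sq_le (by omega) hQ_le
    _ ≤ 2 / log y * (2 * (7 / 5) / (√y / 2)) := by
        gcongr
        exact log_four_le
    _ ≤ 12 / (√y * log y) := by
        rw [div_mul_div_comm, div_le_div_iff₀ (by positivity) (by positivity)]
        nlinarith [mul_pos (by positivity : 0 < √y) hlog]

lemma sum_primes_inv_excessModulus_le (hy : 4 ≤ y) :
    ∑ q ∈ Nat.primesLE ⌊y⌋₊, (excessModulus y q : ℝ)⁻¹ ≤ 32 / (√y * log y) := by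
  have hQ_le : ⌊√y⌋₊ ≤ ⌊y⌋₊ := Nat.floor_mono (sqrt_le_iff.2 ⟨by linarith, by nlinarith⟩)
  have hsplit : Nat.primesLE ⌊y⌋₊ =
      Nat.primesLE ⌊√y⌋₊ ∪ {q ∈ Ioc ⌊√y⌋₊ ⌊y⌋₊ | q.Prime} := by
    ext q
    simp only [mem_union, Nat.mem_primesLE, mem_filter, mem_Ioc]
    grind
  have hdisj : Disjoint (Nat.primesLE ⌊√y⌋₊) {q ∈ Ioc ⌊√y⌋₊ ⌊y⌋₊ | q.Prime} := by
    simp only [disjoint_left, Nat.mem_primesLE, mem_filter, mem_Ioc]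
    grind
  rw [hsplit, sum_union hdisj]
  grw [sum_small_primes_inv_excessModulus_le (by linarith),
    sum_large_primes_inv_excessModulus_le hy]
  exact (by ring : 20 / (√y * log y) + 12 / (√y * log y) = 32 / (√y * log y)).le

end ExcessModulusSum

/-- The type 1 `y`-inconvenient primes up to `x`. -/
def inconvenientPrimes (x y : ℝ) : Set ℕ :=
  {p | p.Prime ∧ (p : ℝ) ≤ x ∧ ¬Dy y (p ^ 2 - 1) ∣ Ly y}

section InconvenientPrimes

open Finset Real

variable {x y : ℝ}

lemma exists_prime_pow_dvd_of_not_Dy_dvd_Ly {n : ℕ} (h : ¬Dy y n ∣ Ly y) :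
    ∃ q ∈ Nat.primesLE ⌊y⌋₊, q ^ (Nat.log q ⌊y⌋₊ + 1) ∣ n := by
  contrapose! h
  have hsub : n.primeFactors.filter (fun q : ℕ ↦ (q : ℝ) ≤ y) ⊆ Nat.primesLE ⌊y⌋₊ := fun q hq ↦ by
    obtain ⟨hqn, hqy⟩ := mem_filter.1 hq
    exact Nat.mem_primesLE.2 ⟨Nat.le_floor hqy, Nat.prime_of_mem_primeFactors hqn⟩
  calc Dy y n ∣ ∏ q ∈ n.primeFactors with ((q : ℕ) : ℝ) ≤ y, q ^ Nat.log q ⌊y⌋₊ := by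
        refine prod_dvd_prod_of_dvd _ _ fun q hq ↦ pow_dvd_pow q ?_
        by_contra! hlt
        exact h q (hsub hq) ((pow_dvd_pow q hlt).trans (Nat.ordProj_dvd n q))
    _ ∣ ∏ q ∈ Nat.primesLE ⌊y⌋₊, q ^ Nat.log q ⌊y⌋₊ := prod_dvd_prod_of_subset _ _ _ hsub
    _ = Ly y := (Nat.lcmUpto_eq_prod_pow_log _).symm

lemma inconvenientPrimes_subset (x y : ℝ) :
    inconvenientPrimes x y ⊆ (Nat.primesLE ⌊y⌋₊).biUnion fun q ↦
      primesInProgression (1 : ZMod (excessModulus y q)) ⌊x⌋₊ ∪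
        primesInProgression (-1 : ZMod (excessModulus y q)) ⌊x⌋₊ := by
  rintro p ⟨hp, hpx, hDL⟩
  obtain ⟨q, hq, hdvd⟩ := exists_prime_pow_dvd_of_not_Dy_dvd_Ly hDL
  have hcast := cast_excessModulus_eq_one_or_neg_one (Nat.prime_of_mem_primesLE hq) hp.ne_zero hdvd
  have hpx : p ∈ Nat.primesLE ⌊x⌋₊ := Nat.mem_primesLE.2 ⟨Nat.le_floor hpx, hp⟩
  simp only [coe_biUnion, Set.mem_iUnion, mem_coe, mem_union, primesInProgression, mem_filter]
  exact ⟨q, hq, hcast.imp (⟨hpx, ·⟩) (⟨hpx, ·⟩)⟩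

lemma card_primesInProgression_excessModulus_mul_log_le (hy : 4 ≤ y) (hxy : y ^ 4 ≤ x) {q : ℕ}
    (hq : q ∈ Nat.primesLE ⌊y⌋₊) (a : ZMod (excessModulus y q)) :
    (#(primesInProgression a ⌊x⌋₊) : ℝ) * log x ≤
      36 * x * log y * (excessModulus y q : ℝ)⁻¹ := by
  have hqpos := (Nat.prime_of_mem_primesLE hq).pos
  have hle := excessModulus_le_sq hqpos (Nat.le_of_mem_primesLE hq)
  have hpos : 0 < excessModulus y q := excessModulus_pos hqpos
  have : NeZero (excessModulus y q) := ⟨hpos.ne'⟩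
  have hsq : (excessModulus y q : ℝ) ^ 2 ≤ x := by
    calc (excessModulus y q : ℝ) ^ 2 ≤ (y ^ 2) ^ 2 := by gcongr
      _ = y ^ 4 := by ring
      _ ≤ x := hxy
  have hx : 0 ≤ x := (by positivity : 0 ≤ y ^ 4).trans hxy
  have hlog : log (excessModulus y q) ≤ 2 * log y := by
    have := log_le_log (mod_cast hpos) hle
    rwa [log_pow] at this
  have hlogy : 1 ≤ log y := by
    rw [le_log_iff_exp_le (by linarith)]
    linarith [exp_one_lt_d9]
  calc _ ≤ 4 * x / excessModulus y q * (5 + 2 * log (excessModulus y q)) :=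
        card_primesInProgression_floor_mul_log_le a hsq
    _ ≤ 4 * x / excessModulus y q * (9 * log y) := by gcongr; linarith
    _ = 36 * x * log y * (excessModulus y q : ℝ)⁻¹ := by ring

lemma ncard_inconvenientPrimes_le_sum (x y : ℝ) :
    ((inconvenientPrimes x y).ncard : ℝ) ≤ ∑ q ∈ Nat.primesLE ⌊y⌋₊,
      ((#(primesInProgression (1 : ZMod (excessModulus y q)) ⌊x⌋₊) : ℝ) +
        #(primesInProgression (-1 : ZMod (excessModulus y q)) ⌊x⌋₊)) := by
  have hcard := Set.ncard_le_ncard (inconvenientPrimes_subset x y) (finite_toSet _)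
  rw [Set.ncard_coe_finset] at hcard
  exact_mod_cast hcard.trans <| card_biUnion_le.trans <| sum_le_sum fun q _ ↦ card_union_le _ _

theorem ncard_inconvenientPrimes_le (hy : 4 ≤ y) (hxy : y ^ 4 ≤ x) :
    ((inconvenientPrimes x y).ncard : ℝ) ≤ 2304 * x / (√y * log x) := by
  have hx : 1 < x := (one_lt_pow₀ (by linarith) (by norm_num)).trans_le hxy
  have hlogy : 0 < log y := log_pos (by linarith)
  rw [← div_div, le_div_iff₀ (log_pos hx)]
  calc ((inconvenientPrimes x y).ncard : ℝ) * log x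
      ≤ ∑ q ∈ Nat.primesLE ⌊y⌋₊, 72 * x * log y * (excessModulus y q : ℝ)⁻¹ := by
        grw [ncard_inconvenientPrimes_le_sum x y, sum_mul]
        · refine sum_le_sum fun q hq ↦ ?_
          have hcard := card_primesInProgression_excessModulus_mul_log_le hy hxy hq
          linarith [hcard 1, hcard (-1)]
        · exact log_nonneg hx.le
    _ ≤ 72 * x * log y * (32 / (√y * log y)) := by
        rw [← mul_sum]
        gcongr
        exact sum_primes_inv_excessModulus_le hy
    _ = 2304 * x / √y := by field_simp; norm_num

end InconvenientPrimes

lemma eventually_div_log_le_primeCounting :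
    ∀ᶠ x : ℝ in atTop, x / (4 * Real.log x) ≤ Nat.primeCounting ⌊x⌋₊ := by
  have hlog := Real.isLittleO_log_id_atTop.bound (show (0 : ℝ) < 1 / 10 by norm_num)
  filter_upwards [eventually_ge_atTop 100, hlog] with x hx hlog
  have hlogx : 0 < Real.log x := Real.log_pos (by linarith)
  have hlogx_le : Real.log x ≤ 1 / 10 * x := by
    simpa [abs_of_pos hlogx, abs_of_pos (by linarith : 0 < x)] using hlog
  have hlog_add_two : Real.log (x + 2) ≤ Real.log 2 + Real.log x := by
    rw [← Real.log_mul (by norm_num) (by linarith)]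
    exact Real.log_le_log (by linarith) (by linarith)
  calc x / (4 * Real.log x) = x / 4 / Real.log x := (div_div ..).symm
    _ ≤ ((x - 1) * Real.log 2 - Real.log (x + 2)) / Real.log x := by
        gcongr
        nlinarith [Real.log_two_gt_d9, Real.log_two_lt_d9]
    _ ≤ Nat.primeCounting ⌊x⌋₊ := Chebyshev.pi_ge' (by linarith)

lemma tendsto_log_log_atTop : Tendsto (fun x : ℝ ↦ Real.log (Real.log x)) atTop atTop :=
  Real.tendsto_log_atTop.comp Real.tendsto_log_atTop

lemma eventually_log_log_pow_le (n : ℕ) : ∀ᶠ x : ℝ in atTop, Real.log (Real.log x) ^ n ≤ x := by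
  filter_upwards [(Real.isLittleO_pow_log_id_atTop (n := n)).bound one_pos, eventually_ge_atTop 1,
    tendsto_log_log_atTop.eventually_ge_atTop 0] with x hlog hx hloglog
  have hlogx : 0 ≤ Real.log x := Real.log_nonneg hx
  calc Real.log (Real.log x) ^ n ≤ Real.log x ^ n :=
        pow_le_pow_left₀ hloglog (Real.log_le_self hlogx) n
    _ ≤ x := by simpa [abs_of_nonneg hlogx, abs_of_nonneg (zero_le_one.trans hx)] using hlog

theorem type1_inconvenient_primes_general {y : ℝ → ℝ} (hy : Tendsto y atTop atTop)
    (hyx : ∀ᶠ x in atTop, y x ^ 4 ≤ x) :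
    (∃ C : ℝ, 0 < C ∧ ∀ᶠ x : ℝ in atTop,
      ((inconvenientPrimes x (y x)).ncard : ℝ) ≤ C * x / (√(y x) * Real.log x)) ∧
    Tendsto (fun x : ℝ ↦ ((inconvenientPrimes x (y x)).ncard : ℝ) / Nat.primeCounting ⌊x⌋₊)
      atTop (𝓝 0) := by
  have hbound : ∀ᶠ x : ℝ in atTop,
      ((inconvenientPrimes x (y x)).ncard : ℝ) ≤ 2304 * x / (√(y x) * Real.log x) := by
    filter_upwards [hy.eventually_ge_atTop 4, hyx] with x hy hyx
    exact ncard_inconvenientPrimes_le hy hyx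
  refine ⟨⟨2304, by norm_num, hbound⟩, ?_⟩
  have hlim : Tendsto (fun x ↦ 9216 / √(y x)) atTop (𝓝 0) :=
    (Real.tendsto_sqrt_atTop.comp hy).const_div_atTop 9216
  refine squeeze_zero' (.of_forall fun x ↦ by positivity) ?_ hlim
  filter_upwards [hbound, eventually_div_log_le_primeCounting, eventually_gt_atTop 1]
    with x hbound hpi hx
  have hlogx : 0 < Real.log x := Real.log_pos hx
  rw [div_le_iff₀ ((by positivity : 0 < x / (4 * Real.log x)).trans_le hpi)]
  calc ((inconvenientPrimes x (y x)).ncard : ℝ) ≤ 2304 * x / (√(y x) * Real.log x) := hbound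
    _ = 9216 / √(y x) * (x / (4 * Real.log x)) := by field_simp; norm_num
    _ ≤ 9216 / √(y x) * Nat.primeCounting ⌊x⌋₊ := by gcongr

theorem type1_inconvenient_primes :
    (∃ C : ℝ, 0 < C ∧ ∀ᶠ x : ℝ in atTop,
      ({p : ℕ | p.Prime ∧ (p : ℝ) ≤ x ∧
          ¬ Dy (Real.log (Real.log x)) (p ^ 2 - 1) ∣ Ly (Real.log (Real.log x))}.ncard : ℝ) ≤
        C * x / (Real.sqrt (Real.log (Real.log x)) * Real.log x)) ∧
    Tendsto (fun x : ℝ =>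
      ({p : ℕ | p.Prime ∧ (p : ℝ) ≤ x ∧
          ¬ Dy (Real.log (Real.log x)) (p ^ 2 - 1) ∣ Ly (Real.log (Real.log x))}.ncard : ℝ) /
        (Nat.primeCounting ⌊x⌋₊ : ℝ)) atTop (𝓝 0) := by
  exact type1_inconvenient_primes_general tendsto_log_log_atTop (eventually_log_log_pow_le 4)
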